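/- Let B, C be real numbers with C ≠ 1, and let ϖ'(x,y) = ((B−1)/(C−1))x² + Bxy and ϱ'(x,y) = ((B−1)/(C−1))Cxy + y². Let W(x,y) = x^{1−C}·(x−y)^{BC−1}·y^{1−B}, defined with real powers for x > y > 0. Then ϖ'(x,y)·W_x(x,y) + ϱ'(x,y)·W_y(x,y) = 0 at every such point; that is, the orbits of the flow with vector field ϖ' • ϱ' are the curves x^{1−C}(x−y)^{BC−1}y^{1−B} = const. -/

import Mathlib

/-! The three lines `x = 0`, `y = 0` and `x = y` are invariant under the field: the derivative of
`x`, `y` and `x - y` along it is the function itself times `κx + By`, `κCx + y` and `κx + y`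
respectively, where `κ = (B - 1) / (C - 1)`. Cofactors behave like logarithmic derivatives, so `W`
has cofactor `(1 - C)(κx + By) + (BC - 1)(κx + y) + (1 - B)(κCx + y)`, which vanishes identically
(Darboux's method). -/

section Cofactor

variable {𝕜 E : Type*} [NontriviallyNormedField 𝕜] [NormedAddCommGroup E] [NormedSpace 𝕜 E]

/-- `K` is a *cofactor* of `f` at `p` in the direction `v`, in the sense of Darboux's theory of
integrability: the derivative of `f` at `p` along `v` is `K * f p`. For a vector field `X` one takes
`v = X p`; differentiability is included so that cofactors of products and powers can be computed,
and `K` is not unique where `f p = 0`. -/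
def HasCofactorAt (f : E → 𝕜) (v : E) (K : 𝕜) (p : E) : Prop :=
  DifferentiableAt 𝕜 f p ∧ fderiv 𝕜 f p v = K * f p

namespace HasCofactorAt

theorem of_clm (L : E →L[𝕜] 𝕜) {v p : E} {K : 𝕜} (h : L v = K * L p) :
    HasCofactorAt L v K p :=
  ⟨L.differentiableAt, by rw [L.fderiv, h]⟩

theorem mul {f g : E → 𝕜} {v p : E} {K M : 𝕜} (hf : HasCofactorAt f v K p)
    (hg : HasCofactorAt g v M p) : HasCofactorAt (fun q => f q * g q) v (K + M) p := by
  refine ⟨hf.1.fun_mul hg.1, ?_⟩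
  calc fderiv 𝕜 (fun q => f q * g q) p v
      = f p * fderiv 𝕜 g p v + g p * fderiv 𝕜 f p v := by
        simp [fderiv_fun_mul hf.1 hg.1]
    _ = (K + M) * (f p * g p) := by rw [hf.2, hg.2]; ring

theorem rpow_const {E : Type*} [NormedAddCommGroup E] [NormedSpace ℝ E] {f : E → ℝ} {v p : E}
    {K : ℝ} (hf : HasCofactorAt f v K p) (hp : f p ≠ 0) (r : ℝ) :
    HasCofactorAt (fun q => f q ^ r) v (r * K) p := by
  have hpow := hf.1.hasFDerivAt.rpow_const (p := r) (.inl hp)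
  refine ⟨hpow.differentiableAt, ?_⟩
  calc fderiv ℝ (fun q => f q ^ r) p v
      = r * f p ^ (r - 1) * fderiv ℝ f p v := by simp [hpow.fderiv]
    _ = r * K * f p ^ r := by rw [hf.2, Real.rpow_sub_one hp]; field_simp

end HasCofactorAt

theorem fderiv_prod_apply_eq_smul_deriv_add {F : Type*} [NormedAddCommGroup F] [NormedSpace 𝕜 F]
    {f : 𝕜 × 𝕜 → F} {x y : 𝕜} (hf : DifferentiableAt 𝕜 f (x, y)) (u v : 𝕜) :
    fderiv 𝕜 f (x, y) (u, v) =
      u • deriv (fun t => f (t, y)) x + v • deriv (fun t => f (x, t)) y := by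
  have hx : HasDerivAt (fun t => f (t, y)) (fderiv 𝕜 f (x, y) (1, 0)) x :=
    hf.hasFDerivAt.comp_hasDerivAt x ((hasDerivAt_id' x).prodMk (hasDerivAt_const x y))
  have hy : HasDerivAt (fun t => f (x, t)) (fderiv 𝕜 f (x, y) (0, 1)) y :=
    hf.hasFDerivAt.comp_hasDerivAt y ((hasDerivAt_const y x).prodMk (hasDerivAt_id' y))
  rw [hx.deriv, hy.deriv, ← map_smul, ← map_smul, ← map_add]
  simp

end Cofactor

/-- The vector field `κx² + Bxy • κCxy + y²`. The field `ϖ' • ϱ'` is the case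
`κ = (B - 1) / (C - 1)`, the value for which the line `x = y` is invariant. -/
def quadraticField (κ B C : ℝ) (p : ℝ × ℝ) : ℝ × ℝ :=
  (κ * p.1 ^ 2 + B * p.1 * p.2, κ * C * p.1 * p.2 + p.2 ^ 2)

namespace quadraticField

variable (κ B C : ℝ) (p : ℝ × ℝ)

theorem hasCofactorAt_fst :
    HasCofactorAt Prod.fst (quadraticField κ B C p) (κ * p.1 + B * p.2) p :=
  .of_clm (.fst ℝ ℝ ℝ) <| by simp only [ContinuousLinearMap.coe_fst', quadraticField]; ring

theorem hasCofactorAt_snd :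
    HasCofactorAt Prod.snd (quadraticField κ B C p) (κ * C * p.1 + p.2) p :=
  .of_clm (.snd ℝ ℝ ℝ) <| by simp only [ContinuousLinearMap.coe_snd', quadraticField]; ring

variable {κ B C p}

theorem hasCofactorAt_fst_sub_snd (hκ : κ * (C - 1) = B - 1) :
    HasCofactorAt (fun q => q.1 - q.2) (quadraticField κ B C p) (κ * p.1 + p.2) p :=
  .of_clm (ContinuousLinearMap.fst ℝ ℝ ℝ - ContinuousLinearMap.snd ℝ ℝ ℝ) <| by
    simp only [sub_apply, ContinuousLinearMap.coe_fst', ContinuousLinearMap.coe_snd',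
      quadraticField]
    linear_combination -(p.1 * p.2) * hκ

theorem hasCofactorAt_zero_rpow_mul_rpow_mul_rpow (hκ : κ * (C - 1) = B - 1) (hx : p.1 ≠ 0)
    (hy : p.2 ≠ 0) (hxy : p.1 ≠ p.2) :
    HasCofactorAt (fun q => q.1 ^ (1 - C) * (q.1 - q.2) ^ (B * C - 1) * q.2 ^ (1 - B))
      (quadraticField κ B C p) 0 p := by
  have cofactors_cancel : (1 - C) * (κ * p.1 + B * p.2) + (B * C - 1) * (κ * p.1 + p.2) +
      (1 - B) * (κ * C * p.1 + p.2) = 0 := by ring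
  rw [← cofactors_cancel]
  exact (((hasCofactorAt_fst κ B C p).rpow_const hx _).mul
    ((hasCofactorAt_fst_sub_snd hκ).rpow_const (sub_ne_zero.mpr hxy) _)).mul
    ((hasCofactorAt_snd κ B C p).rpow_const hy _)

end quadraticField

/-- For `t < 0` the real power `t ^ r` is `|t| ^ r * cos (r * π)`, so in each of the six sectors cut
out by the invariant lines the function is a constant multiple of
`|x| ^ (1 - C) * |x - y| ^ (B * C - 1) * |y| ^ (1 - B)`. -/
theorem orbits_of_general_quadratic_vector_field_general (B C : ℝ) (hC : C ≠ 1)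
    (x y : ℝ) (hx : x ≠ 0) (hy : y ≠ 0) (hxy : x ≠ y) :
    ((B - 1) / (C - 1) * x ^ 2 + B * x * y) *
        deriv (fun t => t ^ (1 - C) * (t - y) ^ (B * C - 1) * y ^ (1 - B)) x +
      ((B - 1) / (C - 1) * C * x * y + y ^ 2) *
        deriv (fun t => x ^ (1 - C) * (x - t) ^ (B * C - 1) * t ^ (1 - B)) y = 0 := by
  have hκ : (B - 1) / (C - 1) * (C - 1) = B - 1 := div_mul_cancel₀ _ (sub_ne_zero.mpr hC)
  obtain ⟨hdiff, hzero⟩ :=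
    quadraticField.hasCofactorAt_zero_rpow_mul_rpow_mul_rpow (p := (x, y)) hκ hx hy hxy
  rw [zero_mul] at hzero
  exact (fderiv_prod_apply_eq_smul_deriv_add hdiff _ _).symm.trans hzero

/-- For `C ≠ 1`, the function `W(x,y) = x^{1-C}(x-y)^{BC-1}y^{1-B}` (real powers,
`x > y > 0`) is a first integral of the vector field
`ϖ'(x,y) = ((B-1)/(C-1))x² + Bxy`, `ϱ'(x,y) = ((B-1)/(C-1))Cxy + y²`. -/
theorem orbits_of_general_quadratic_vector_field (B C : ℝ) (hC : C ≠ 1)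
    (x y : ℝ) (hxy : x > y) (hy : y > 0) :
    ((B - 1) / (C - 1) * x ^ 2 + B * x * y) *
        deriv (fun t => t ^ (1 - C) * (t - y) ^ (B * C - 1) * y ^ (1 - B)) x +
      ((B - 1) / (C - 1) * C * x * y + y ^ 2) *
        deriv (fun t => x ^ (1 - C) * (x - t) ^ (B * C - 1) * t ^ (1 - B)) y = 0 :=
  orbits_of_general_quadratic_vector_field_general B C hC x y (hy.trans hxy).ne' hy.ne' hxy.ne'
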